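/- arXiv:1312.5501 — 2 statements merged into one kernel-verified Lean document; each statement's English description precedes it below -/
import Mathlib

section
/- (Boundary-moving lemma.) Let P be a modular operad in sets and f: Ass → P a morphism of cyclic operads. Let L = (l₁,…,l_i), M, N be tuples of distinct labels and x, y two further distinct labels. Let Ξ be any composition of contractions ξ_{e e'} whose indices e, e' run over entries of L, M, N (the same composition on both sides). Then Ξ ξ_{xy} f⟨x L y M N⟩ = Ξ ξ_{xy} f⟨M x L y N⟩. Informally: a 'boundary' — a sequence of consecutive labels whose first and last are joined by an arc — can be moved anywhere on the circle. -/
/-- A modular operad in the category of sets, presented with labels drawn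
from `ℕ`: an element `x` has a finite set `legs x` of labels and a genus
`gen x`.  Bijections act via functions `ℕ → ℕ` that are injective on the
legs, `comp a b` is the operadic composition `∘_{a,b}` and `xi a b` is
the contraction `ξ_{ab}`. -/
structure ModularOperad where
  El : Type
  legs : El → Finset ℕ
  gen : El → ℕ
  act : (ℕ → ℕ) → El → El
  comp : ℕ → ℕ → El → El → El
  xi : ℕ → ℕ → El → El
  -- book-keeping of legs and genus
  legs_act : ∀ (ρ : ℕ → ℕ) (x : El), Set.InjOn ρ (legs x : Set ℕ) →
    legs (act ρ x) = (legs x).image ρ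
  gen_act : ∀ (ρ : ℕ → ℕ) (x : El), Set.InjOn ρ (legs x : Set ℕ) →
    gen (act ρ x) = gen x
  legs_comp : ∀ (a b : ℕ) (x y : El), a ∈ legs x → b ∈ legs y →
    Disjoint (legs x) (legs y) →
    legs (comp a b x y) = (legs x).erase a ∪ (legs y).erase b
  gen_comp : ∀ (a b : ℕ) (x y : El), a ∈ legs x → b ∈ legs y →
    Disjoint (legs x) (legs y) →
    gen (comp a b x y) = gen x + gen y
  legs_xi : ∀ (a b : ℕ) (x : El), a ∈ legs x → b ∈ legs x → a ≠ b →
    legs (xi a b x) = ((legs x).erase a).erase b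
  gen_xi : ∀ (a b : ℕ) (x : El), a ∈ legs x → b ∈ legs x → a ≠ b →
    gen (xi a b x) = gen x + 1
  -- `ξ_{ab} = ξ_{ba}`
  xi_symm : ∀ (a b : ℕ) (x : El), xi a b x = xi b a x
  -- functoriality of the action (axiom 2)
  act_id : ∀ x : El, act id x = x
  act_congr : ∀ (ρ ρ' : ℕ → ℕ) (x : El), (∀ c ∈ legs x, ρ c = ρ' c) →
    act ρ x = act ρ' x
  act_act : ∀ (ρ σ : ℕ → ℕ) (x : El), Set.InjOn σ (legs x : Set ℕ) →
    Set.InjOn ρ (((legs x).image σ : Finset ℕ) : Set ℕ) →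
    act (ρ ∘ σ) x = act ρ (act σ x)
  -- axiom 1: symmetry of `∘`
  comp_symm : ∀ (a b : ℕ) (x y : El), a ∈ legs x → b ∈ legs y →
    Disjoint (legs x) (legs y) → comp a b x y = comp b a y x
  -- axiom 3: equivariance of `∘`
  act_comp : ∀ (ρ : ℕ → ℕ) (a b : ℕ) (x y : El), a ∈ legs x → b ∈ legs y →
    Disjoint (legs x) (legs y) →
    Set.InjOn ρ ((legs x ∪ legs y : Finset ℕ) : Set ℕ) →
    act ρ (comp a b x y) = comp (ρ a) (ρ b) (act ρ x) (act ρ y)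
  -- axiom 4: equivariance of `ξ`
  act_xi : ∀ (ρ : ℕ → ℕ) (a b : ℕ) (x : El), a ∈ legs x → b ∈ legs x →
    a ≠ b → Set.InjOn ρ (legs x : Set ℕ) →
    act ρ (xi a b x) = xi (ρ a) (ρ b) (act ρ x)
  -- axiom 5
  xi_xi : ∀ (a b c d : ℕ) (x : El), a ∈ legs x → b ∈ legs x → c ∈ legs x →
    d ∈ legs x → a ≠ b → c ≠ d → a ≠ c → a ≠ d → b ≠ c → b ≠ d →
    xi a b (xi c d x) = xi c d (xi a b x)
  -- axiom 6: `ξ_{ab}(x ∘_{c,d} y) = ξ_{cd}(x ∘_{a,b} y)`,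
  -- `a, c` legs of `x` and `b, d` legs of `y`
  xi_comp_exchange : ∀ (a b c d : ℕ) (x y : El), a ∈ legs x → c ∈ legs x →
    b ∈ legs y → d ∈ legs y → a ≠ c → b ≠ d → Disjoint (legs x) (legs y) →
    xi a b (comp c d x y) = xi c d (comp a b x y)
  -- axiom 7: `ξ_{cd}(x) ∘_{a,b} y = ξ_{cd}(x ∘_{a,b} y)`, `c, d` legs of `x`
  xi_comp_left : ∀ (a b c d : ℕ) (x y : El), a ∈ legs x → b ∈ legs y →
    c ∈ legs x → d ∈ legs x → c ≠ d → a ≠ c → a ≠ d →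
    Disjoint (legs x) (legs y) →
    comp a b (xi c d x) y = xi c d (comp a b x y)
  -- axiom 8: associativity of `∘`
  comp_assoc : ∀ (a b c d : ℕ) (x y z : El), a ∈ legs x → b ∈ legs y →
    c ∈ legs y → d ∈ legs z → b ≠ c →
    Disjoint (legs x) (legs y) → Disjoint (legs x) (legs z) →
    Disjoint (legs y) (legs z) →
    comp c d (comp a b x y) z = comp a b x (comp c d y z)

/-- A morphism of cyclic operads `f : Ass → P` into (the underlying cyclic
operad of) a modular operad `P`.  An element of `Ass(C)` is a cyclic order
on the nonempty finite set `C`, represented by a nonempty duplicate-free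
list of labels, two lists representing the same element iff they are
rotations of each other (`f_rot`).  `f` lands in the genus `0` part of `P`,
commutes with the actions of bijections (`f_act`) and with the cyclic
operad composition `⟨X a⟩ ∘_{a,b} ⟨b Y⟩ = ⟨X Y⟩` (`f_comp`). -/
structure AssMorphism (P : ModularOperad) where
  f : List ℕ → P.El
  legs_f : ∀ l : List ℕ, l ≠ [] → l.Nodup → P.legs (f l) = l.toFinset
  gen_f : ∀ l : List ℕ, l ≠ [] → l.Nodup → P.gen (f l) = 0
  f_rot : ∀ l l' : List ℕ, l ≠ [] → l.Nodup → l ~r l' → f l = f l'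
  f_act : ∀ (ρ : ℕ → ℕ) (l : List ℕ), l ≠ [] → l.Nodup →
    Set.InjOn ρ (l.toFinset : Set ℕ) → f (l.map ρ) = P.act ρ (f l)
  f_comp : ∀ (X Y : List ℕ) (a b : ℕ), (X ++ a :: b :: Y).Nodup →
    X ++ Y ≠ [] →
    P.comp a b (f (X ++ [a])) (f (b :: Y)) = f (X ++ Y)

/-- A morphism of modular operads. -/
structure ModularHom (Q P : ModularOperad) where
  toFun : Q.El → P.El
  legs_map : ∀ x, P.legs (toFun x) = Q.legs x
  gen_map : ∀ x, P.gen (toFun x) = Q.gen x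
  map_act : ∀ (ρ : ℕ → ℕ) (x : Q.El), Set.InjOn ρ (Q.legs x : Set ℕ) →
    toFun (Q.act ρ x) = P.act ρ (toFun x)
  map_comp : ∀ (a b : ℕ) (x y : Q.El), a ∈ Q.legs x → b ∈ Q.legs y →
    Disjoint (Q.legs x) (Q.legs y) →
    toFun (Q.comp a b x y) = P.comp a b (toFun x) (toFun y)
  map_xi : ∀ (a b : ℕ) (x : Q.El), a ∈ Q.legs x → b ∈ Q.legs x → a ≠ b →
    toFun (Q.xi a b x) = P.xi a b (toFun x)

/-- A list of blocks `L = [C₁, …, C_b]` is a valid presentation of an element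
`{⟨C₁⟩, …, ⟨C_b⟩}` of `QO` iff there is at least one block, the blocks are
nonempty and they are duplicate-free and pairwise disjoint. -/
def QOValid (L : List (List ℕ)) : Prop :=
  L ≠ [] ∧ L.flatten.Nodup ∧ ∀ l ∈ L, l ≠ []

/-- Two lists of blocks present the same element of `QO` iff one can be taken
to the other by permuting the blocks and rotating each block. -/
def QOEquiv (L L' : List (List ℕ)) : Prop :=
  ∃ L'' : List (List ℕ), L.Perm L'' ∧ List.Forall₂ (· ~r ·) L'' L'

/-- The modular operad `QO` of homeomorphism classes of 2D compact surfaces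
with marked points on the boundary: a modular operad `Q` together with a
presentation `ofBlocks L g` of its elements, `ofBlocks [C₁, …, C_b] g` being the symbol
`{⟨C₁⟩, …, ⟨C_b⟩}^g` of geometric genus `g` and operadic genus
`G = 2g + b - 1`, with the relabeling action, composition (gluing two
marked points on boundaries of two different surfaces) and contraction
(gluing two marked points of the same surface, either on the same boundary
component or on two different ones) given by the explicit formulas below.
The canonical inclusion `ι : Ass → QO` sends `⟨C⟩` to `ofBlocks [C] 0`. -/
structure QOperad where
  Q : ModularOperad
  ofBlocks : List (List ℕ) → ℕ → Q.El
  legs_mk : ∀ (L : List (List ℕ)) (g : ℕ), QOValid L →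
    Q.legs (ofBlocks L g) = L.flatten.toFinset
  gen_mk : ∀ (L : List (List ℕ)) (g : ℕ), QOValid L →
    Q.gen (ofBlocks L g) = 2 * g + L.length - 1
  mk_equiv : ∀ (L L' : List (List ℕ)) (g : ℕ), QOValid L → QOEquiv L L' →
    ofBlocks L g = ofBlocks L' g
  mk_inj : ∀ (L L' : List (List ℕ)) (g g' : ℕ), QOValid L → QOValid L' →
    ofBlocks L g = ofBlocks L' g' → g = g' ∧ QOEquiv L L'
  mk_surj : ∀ x : Q.El, ∃ (L : List (List ℕ)) (g : ℕ), QOValid L ∧ x = ofBlocks L g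
  act_mk : ∀ (ρ : ℕ → ℕ) (L : List (List ℕ)) (g : ℕ), QOValid L →
    Set.InjOn ρ (L.flatten.toFinset : Set ℕ) →
    Q.act ρ (ofBlocks L g) = ofBlocks (L.map (List.map ρ)) g
  comp_mk : ∀ (X Y : List ℕ) (R R' : List (List ℕ)) (a b g g' : ℕ),
    QOValid ((X ++ [a]) :: R) → QOValid ((b :: Y) :: R') →
    (((X ++ [a]) :: R).flatten ++ ((b :: Y) :: R').flatten).Nodup →
    X ++ Y ≠ [] →
    Q.comp a b (ofBlocks ((X ++ [a]) :: R) g) (ofBlocks ((b :: Y) :: R') g') =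
      ofBlocks ((X ++ Y) :: (R ++ R')) (g + g')
  xi_same_mk : ∀ (A B : List ℕ) (R : List (List ℕ)) (a b g : ℕ),
    QOValid ((a :: (A ++ b :: B)) :: R) → A ≠ [] → B ≠ [] →
    Q.xi a b (ofBlocks ((a :: (A ++ b :: B)) :: R) g) = ofBlocks (B :: A :: R) g
  xi_diff_mk : ∀ (A B : List ℕ) (R : List (List ℕ)) (a b g : ℕ),
    QOValid ((a :: A) :: (b :: B) :: R) → B ++ A ≠ [] →
    Q.xi a b (ofBlocks ((a :: A) :: (b :: B) :: R) g) = ofBlocks ((B ++ A) :: R) (g + 1)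

/-- `xiChain P [(a₁,b₁), …, (aₙ,bₙ)] x = ξ_{a₁b₁}(ξ_{a₂b₂}(⋯(ξ_{aₙbₙ} x)))`. -/
def xiChain (P : ModularOperad) (prs : List (ℕ × ℕ)) (x : P.El) : P.El :=
  prs.foldr (fun p y => P.xi p.1 p.2 y) x

/-- The pairs `(e₁,e₂), (e₃,e₄), …, (e_{2k-1}, e_{2k})` of contracted labels
(`e` is used with 1-based indices). -/
def pairList (e : ℕ → ℕ) (k : ℕ) : List (ℕ × ℕ) :=
  (List.range k).map fun i => (e (2 * i + 1), e (2 * i + 2))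

/-- The list of contracted pairs of a canonical expression with `b` boundary
components and geometric genus `g`:
`ξ_{12} ξ_{34} ⋯ ξ_{2b-3,2b-2} ξ_{2b-1,2b+1} ξ_{2b,2b+2} ⋯ ξ_{2b+4g-5,2b+4g-3} ξ_{2b+4g-4,2b+4g-2}`
(indices of the fresh labels `e`, 1-based). -/
def canonPairs (b g : ℕ) (e : ℕ → ℕ) : List (ℕ × ℕ) :=
  ((List.range (b - 1)).map fun i => (e (2 * i + 1), e (2 * i + 2))) ++
    ((List.range g).map fun j =>
      [(e (2 * b - 1 + 4 * j), e (2 * b + 1 + 4 * j)),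
       (e (2 * b + 4 * j), e (2 * b + 2 + 4 * j))]).flatten

/-- The list `C₁ e₁ C₂ e₂ e₃ C₃ e₄ ⋯ e_{2b-3} C_b e_{2b-2} e_{2b-1} e_{2b} ⋯ e_{4g+2b-2}`
representing the cyclic order `a_q` of a canonical expression (`e` is used
with 1-based indices). -/
def canonList (L : List (List ℕ)) (g : ℕ) (e : ℕ → ℕ) : List ℕ :=
  match L with
  | [] => []
  | C₁ :: rest =>
      C₁ ++ (rest.zipIdx.map fun p => e (2 * p.2 + 1) :: (p.1 ++ [e (2 * p.2 + 2)])).flatten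
        ++ ((List.range (4 * g)).map fun j => e (2 * rest.length + 1 + j))

/-- `e 1, …, e n` are pairwise distinct labels avoiding the finite set `S`. -/
def FreshLabels (e : ℕ → ℕ) (n : ℕ) (S : Finset ℕ) : Prop :=
  Set.InjOn e (Set.Icc 1 n) ∧ ∀ i ∈ Set.Icc 1 n, e i ∉ S

/-!
Two pieces `⟨a K y M⟩` and `⟨b N x L⟩` can be closed up in two ways: compose along `a, b` and
contract `x, y`, or compose along `y, x` and contract `a, b`. The two results agree in a modular
operad, so `ξ_{xy} f⟨x L K y M N⟩ = ξ_{ab} f⟨a K L b N M⟩`: the arc `x, y` is traded for `a, b`, and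
each of the two boundaries it cuts off is rotated. Trading fresh labels `a, b` back for `x, y`,
this time without rotating, shows that `ξ_{xy} f⟨x A y B⟩` depends only on the cyclic orders `⟨A⟩`
and `⟨B⟩`. Moving a boundary past `M` is the rotation of `B = M N` to `N M`.
-/

theorem exists_append_of_isRotated {α : Type*} {l l' : List α} (h : l ~r l') :
    ∃ s t, l = s ++ t ∧ l' = t ++ s := by
  obtain ⟨n, hn, rfl⟩ := List.isRotated_iff_mod.1 h
  exact ⟨l.take n, l.drop n, (List.take_append_drop n l).symm,
    List.rotate_eq_drop_append_take hn⟩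

namespace AssMorphism

variable {P : ModularOperad} (f : AssMorphism P) {A A' B B' K L M N : List ℕ} {a b x y : ℕ}

theorem f_append_comm (hne : A ++ B ≠ []) (hnd : (A ++ B).Nodup) :
    f.f (A ++ B) = f.f (B ++ A) :=
  f.f_rot _ _ hne hnd List.isRotated_append

theorem mem_legs_f {l : List ℕ} (hnd : l.Nodup) (ha : a ∈ l) : a ∈ P.legs (f.f l) := by
  rw [f.legs_f l (List.ne_nil_of_mem ha) hnd]
  exact List.mem_toFinset.2 ha

theorem disjoint_legs_f (hA : A ≠ []) (hB : B ≠ []) (hnd : (A ++ B).Nodup) :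
    Disjoint (P.legs (f.f A)) (P.legs (f.f B)) := by
  rw [f.legs_f A hA hnd.of_append_left, f.legs_f B hB hnd.of_append_right,
    List.disjoint_toFinset_iff_disjoint]
  exact List.disjoint_of_nodup_append hnd

theorem comp_f_cons_cons (hne : A ++ B ≠ []) (hnd : (a :: A ++ b :: B).Nodup) :
    P.comp a b (f.f (a :: A)) (f.f (b :: B)) = f.f (A ++ B) := by
  have hrot : f.f (a :: A) = f.f (A ++ [a]) :=
    f.f_append_comm (A := [a]) (B := A) (List.cons_ne_nil a A) hnd.of_append_left
  rw [hrot]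
  exact f.f_comp A B a b (List.perm_middle.nodup_iff.2 hnd) hne

theorem xi_f_exchange (hnd : (a :: (K ++ y :: M) ++ b :: (N ++ x :: L)).Nodup) :
    P.xi x y (f.f (K ++ y :: M ++ (N ++ x :: L))) =
      P.xi a b (f.f (M ++ a :: K ++ (L ++ b :: N))) := by
  have hA : (a :: (K ++ y :: M)).Nodup := hnd.of_append_left
  have hB : (b :: (N ++ x :: L)).Nodup := hnd.of_append_right
  have hrot_a : f.f (a :: (K ++ y :: M)) = f.f (y :: (M ++ a :: K)) :=
    f.f_append_comm (A := a :: K) (B := y :: M) (List.cons_ne_nil _ _) hA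
  have hrot_b : f.f (b :: (N ++ x :: L)) = f.f (x :: (L ++ b :: N)) :=
    f.f_append_comm (A := b :: N) (B := x :: L) (List.cons_ne_nil _ _) hB
  have hperm : (a :: (K ++ y :: M) ++ b :: (N ++ x :: L)).Perm
      (y :: (M ++ a :: K) ++ x :: (L ++ b :: N)) :=
    (List.perm_append_comm (l₁ := a :: K)).append (List.perm_append_comm (l₁ := b :: N))
  have hya : y ≠ a := by rintro rfl; simp at hA
  have hxb : x ≠ b := by rintro rfl; simp at hB
  rw [P.xi_symm x y, ← f.comp_f_cons_cons (by simp) hnd,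
    ← f.comp_f_cons_cons (by simp) (hperm.nodup_iff.1 hnd), ← hrot_a, ← hrot_b]
  exact P.xi_comp_exchange y x a b _ _ (f.mem_legs_f hA (by simp)) (f.mem_legs_f hA (by simp))
    (f.mem_legs_f hB (by simp)) (f.mem_legs_f hB (by simp)) hya hxb
    (f.disjoint_legs_f (List.cons_ne_nil _ _) (List.cons_ne_nil _ _) hnd)

theorem xi_f_eq_of_isRotated (hA : A ~r A') (hB : B ~r B')
    (hnd : (a :: b :: (x :: A ++ y :: B)).Nodup) :
    P.xi x y (f.f (x :: A ++ y :: B)) = P.xi a b (f.f (a :: A' ++ b :: B')) := by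
  have hnd_xy : (x :: A ++ y :: B).Nodup := hnd.of_cons.of_cons
  have hnd_ab : (a :: A' ++ b :: B').Nodup := by
    have hsub : (a :: b :: (A ++ B)).Sublist (a :: b :: (x :: A ++ y :: B)) :=
      (((List.sublist_cons_self x A).append (List.sublist_cons_self y B)).cons_cons b).cons_cons a
    have hperm : (a :: b :: (A ++ B)).Perm (a :: (A' ++ b :: B')) :=
      (((hA.perm.append hB.perm).cons b).trans List.perm_middle.symm).cons a
    exact hperm.nodup_iff.1 (hnd.sublist hsub)
  obtain ⟨L, K, rfl, rfl⟩ := exists_append_of_isRotated hA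
  obtain ⟨M, N, rfl, rfl⟩ := exists_append_of_isRotated hB
  have hrot_xy : f.f (x :: (L ++ K) ++ y :: (M ++ N)) = f.f (K ++ y :: M ++ (N ++ x :: L)) := by
    have h := f.f_append_comm (A := x :: L) (B := K ++ y :: M ++ N) (by simp)
      (by simpa using hnd_xy)
    simpa using h
  have hrot_ab : f.f (a :: (K ++ L) ++ b :: (N ++ M)) = f.f (M ++ a :: K ++ (L ++ b :: N)) := by
    have h := f.f_append_comm (A := a :: K ++ (L ++ b :: N)) (B := M) (by simp)
      (by simpa using hnd_ab)
    simpa using h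
  have hperm : (a :: (K ++ y :: M) ++ b :: (N ++ x :: L)).Perm
      (a :: b :: (x :: (L ++ K) ++ y :: (M ++ N))) :=
    List.perm_iff_count.2 fun c => by simp only [List.count_append, List.count_cons]; omega
  rw [hrot_xy, hrot_ab, f.xi_f_exchange (hperm.nodup_iff.2 hnd)]

end AssMorphism

theorem boundary_move_general {P : ModularOperad} (f : AssMorphism P) {A A' B B' : List ℕ}
    {x y : ℕ} (hA : A ~r A') (hB : B ~r B') (hnd : (x :: A ++ y :: B).Nodup) :
    P.xi x y (f.f (x :: A ++ y :: B)) = P.xi x y (f.f (x :: A' ++ y :: B')) := by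
  obtain ⟨b, hb⟩ := Infinite.exists_notMem_finset (x :: A ++ y :: B).toFinset
  obtain ⟨a, ha⟩ := Infinite.exists_notMem_finset (b :: (x :: A ++ y :: B)).toFinset
  have hnd_fresh : (a :: b :: (x :: A ++ y :: B)).Nodup :=
    (hnd.cons (List.mem_toFinset.not.1 hb)).cons (List.mem_toFinset.not.1 ha)
  have hperm : (a :: b :: (x :: A ++ y :: B)).Perm (a :: b :: (x :: A' ++ y :: B')) :=
    (((hA.perm.cons x).append (hB.perm.cons y)).cons b).cons a
  calc P.xi x y (f.f (x :: A ++ y :: B))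
    _ = P.xi a b (f.f (a :: A' ++ b :: B')) := f.xi_f_eq_of_isRotated hA hB hnd_fresh
    _ = P.xi x y (f.f (x :: A' ++ y :: B')) :=
      (f.xi_f_eq_of_isRotated (.refl A') (.refl B') (hperm.nodup_iff.1 hnd_fresh)).symm

/-- (Boundary-moving lemma.)  For any composition `Ξ` of
contractions whose indices run over the entries of `L`, `M`, `N`,
`Ξ ξ_{xy} f⟨x L y M N⟩ = Ξ ξ_{xy} f⟨M x L y N⟩`: a boundary — a sequence of
consecutive labels whose first and last are joined by an arc — can be moved
anywhere on the circle. -/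
theorem boundary_move (P : ModularOperad) (f : AssMorphism P)
    (L M N : List ℕ) (x y : ℕ) (prs : List (ℕ × ℕ))
    (hnd : (x :: (L ++ y :: (M ++ N))).Nodup)
    (hprs : ∀ p ∈ prs, p.1 ∈ L ++ M ++ N ∧ p.2 ∈ L ++ M ++ N) :
    xiChain P prs (P.xi x y (f.f (x :: (L ++ y :: (M ++ N))))) =
      xiChain P prs (P.xi x y (f.f (M ++ x :: (L ++ y :: N)))) := by
  have hnd_swap : (x :: L ++ y :: N ++ M).Nodup := by
    simpa using ((List.perm_append_comm.cons y).append_left (x :: L)).nodup_iff.1 hnd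
  have hrot : f.f (M ++ x :: (L ++ y :: N)) = f.f (x :: L ++ y :: (N ++ M)) := by
    simpa using (f.f_append_comm (by simp) hnd_swap).symm
  rw [hrot]
  exact congrArg (xiChain P prs) (boundary_move_general f (.refl L) List.isRotated_append hnd)
end

section
/- Let P be a modular operad in sets and f: Ass → P a morphism of cyclic operads. Let a_q := ⟨C₁ e₁ C₂ e₂ e₃ C₃ e₄ ⋯ Cᵢ ⋯ e_{2b−3} C_b e_{2b−2} e_{2b−1} ⋯ e_{4g+2b−2}⟩ and let a'_q be obtained from a_q by exchanging the blocks C₁ and Cᵢ (2 ≤ i ≤ b), leaving everything else unchanged. Then ξ_{12}ξ_{34}⋯ξ_{2b+4g−4,2b+4g−2} f(a_q) = ξ_{12}ξ_{34}⋯ξ_{2b+4g−4,2b+4g−2} f(a'_q), where ξ_{ij} abbreviates ξ_{e_i e_j} and the string of contractions is the canonical one ξ_{12}⋯ξ_{2b−3,2b−2}ξ_{2b−1,2b+1}⋯ξ_{2b+4g−4,2b+4g−2}. -/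
/-!
Cutting `⟨a X b Y⟩` along a second arc `cd` and using `ξ_{ab}(x ∘_{c,d} y) = ξ_{cd}(x ∘_{a,b} y)`
shows that `ξ_{ab} f⟨a X b Y⟩` depends only on the unordered pair of cyclic orders `⟨X⟩`, `⟨Y⟩`:
these are the two boundary components of the annulus obtained by gluing `a` to `b`.  Hence, after
contraction, a block `a C b` can be moved anywhere in the word, and so can a handle `a b c d`, whose
letters are passed one at a time.  Once the other blocks have been moved out of the way, `C₁` and
`Cᵢ` lie on the two sides of the pair of labels enclosing `Cᵢ`, and exchanging the sides exchanges
them.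
-/

theorem nodup_of_count_le {α : Type*} [DecidableEq α] {l l' : List α} (hl' : l'.Nodup)
    (h : ∀ a, l.count a ≤ l'.count a) : l.Nodup :=
  List.nodup_iff_count_le_one.2 fun a => (h a).trans (List.nodup_iff_count_le_one.1 hl' a)

/-- All labels contracted by `xiChain P S`, pair by pair. -/
def endpoints (S : List (ℕ × ℕ)) : List ℕ := S.flatMap fun p => [p.1, p.2]

theorem endpoints_cons (p : ℕ × ℕ) (S : List (ℕ × ℕ)) :
    endpoints (p :: S) = p.1 :: p.2 :: endpoints S := rfl

theorem endpoints_append (S T : List (ℕ × ℕ)) :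
    endpoints (S ++ T) = endpoints S ++ endpoints T :=
  List.flatMap_append

namespace ModularOperad

variable {P : ModularOperad}

theorem act_eq_self {ρ : ℕ → ℕ} {x : P.El} (h : ∀ c ∈ P.legs x, ρ c = c) : P.act ρ x = x := by
  rw [P.act_congr ρ id x h, P.act_id]

theorem xiChain_cons (p : ℕ × ℕ) (S : List (ℕ × ℕ)) (x : P.El) :
    xiChain P (p :: S) x = P.xi p.1 p.2 (xiChain P S x) := rfl

theorem mem_legs_xiChain {S : List (ℕ × ℕ)} {x : P.El} (hnd : (endpoints S).Nodup)
    (hsub : ∀ c ∈ endpoints S, c ∈ P.legs x) {c : ℕ} :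
    c ∈ P.legs (xiChain P S x) ↔ c ∈ P.legs x ∧ c ∉ endpoints S := by
  induction S generalizing c with
  | nil => simp [xiChain, endpoints]
  | cons p S ih =>
    simp only [endpoints_cons, List.nodup_cons, List.mem_cons, forall_eq_or_imp, not_or]
      at hnd hsub ⊢
    have ih := @ih hnd.2.2 hsub.2.2
    rw [xiChain_cons, P.legs_xi _ _ _ (ih.2 ⟨hsub.1, hnd.1.2⟩) (ih.2 ⟨hsub.2.1, hnd.2.1⟩) hnd.1.1]
    simp only [Finset.mem_erase, ih]
    tauto

theorem xi_xiChain_comm {S : List (ℕ × ℕ)} {a b : ℕ} {x : P.El}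
    (hnd : (endpoints ((a, b) :: S)).Nodup)
    (hsub : ∀ c ∈ endpoints ((a, b) :: S), c ∈ P.legs x) :
    P.xi a b (xiChain P S x) = xiChain P S (P.xi a b x) := by
  induction S with
  | nil => rfl
  | cons p S ih =>
    simp only [endpoints_cons, List.nodup_cons, List.mem_cons, forall_eq_or_imp, not_or]
      at hnd hsub ih
    have mem_legs {c : ℕ} := mem_legs_xiChain (c := c) hnd.2.2.2.2 hsub.2.2.2.2
    rw [xiChain_cons, xiChain_cons, P.xi_xi, ih] <;> grind

theorem xiChain_eq_of_xi_eq {S : List (ℕ × ℕ)} {a b : ℕ} {x y : P.El}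
    (hnd : (endpoints S).Nodup) (hx : ∀ c ∈ endpoints S, c ∈ P.legs x)
    (hy : ∀ c ∈ endpoints S, c ∈ P.legs y) (hab : (a, b) ∈ S) (h : P.xi a b x = P.xi a b y) :
    xiChain P S x = xiChain P S y := by
  induction S with
  | nil => simp at hab
  | cons p S ih =>
    rcases List.mem_cons.1 hab with rfl | hab
    · rw [xiChain_cons, xiChain_cons, xi_xiChain_comm hnd hx, xi_xiChain_comm hnd hy, h]
    · simp only [endpoints_cons, List.nodup_cons, List.mem_cons, forall_eq_or_imp] at hnd hx hy
      rw [xiChain_cons, xiChain_cons, ih hnd.2.2 hx.2.2 hy.2.2 hab]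

end ModularOperad

namespace AssMorphism

variable {P : ModularOperad} (f : AssMorphism P)

theorem mem_legs {l : List ℕ} (hl : l.Nodup) {c : ℕ} (hc : c ∈ l) : c ∈ P.legs (f.f l) := by
  rwa [f.legs_f l (List.ne_nil_of_mem hc) hl, List.mem_toFinset]

theorem f_eq_of_isRotated {l l' : List ℕ} (hl : l.Nodup) (h : l ~r l') : f.f l = f.f l' := by
  rcases eq_or_ne l [] with rfl | hne
  · rw [List.isRotated_nil_iff'.1 h]
  · exact f.f_rot l l' hne hl h

theorem xi_f_relabel {a b c d : ℕ} {X Y : List ℕ} (h : (a :: b :: c :: d :: (X ++ Y)).Nodup) :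
    P.xi a b (f.f (a :: X ++ b :: Y)) = P.xi c d (f.f (c :: X ++ d :: Y)) := by
  let ρ : Equiv.Perm ℕ := Equiv.swap a c * Equiv.swap b d
  have hρa : ρ a = c := by simp only [ρ, Equiv.Perm.mul_apply]; grind
  have hρb : ρ b = d := by simp only [ρ, Equiv.Perm.mul_apply]; grind
  have hρ {n : ℕ} (hn : n ≠ a ∧ n ≠ b ∧ n ≠ c ∧ n ≠ d) : ρ n = n := by
    simp only [ρ, Equiv.Perm.mul_apply]; grind
  have hnd : (a :: X ++ b :: Y).Nodup := by grind
  have hmap : (a :: X ++ b :: Y).map ρ = c :: X ++ d :: Y := by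
    have map_eq {Z : List ℕ} (hZ : ∀ n ∈ Z, ρ n = n) : Z.map ρ = Z :=
      (List.map_congr_left hZ).trans Z.map_id'
    rw [List.map_append, List.map_cons, List.map_cons, hρa, hρb,
      map_eq fun n hn => hρ (by grind), map_eq fun n hn => hρ (by grind)]
  have ha : a ∈ P.legs (f.f (a :: X ++ b :: Y)) := f.mem_legs hnd (by simp)
  have hb : b ∈ P.legs (f.f (a :: X ++ b :: Y)) := f.mem_legs hnd (by simp)
  have hab : a ≠ b := by grind
  calc P.xi a b (f.f (a :: X ++ b :: Y))
    _ = P.act ρ (P.xi a b (f.f (a :: X ++ b :: Y))) := by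
      refine (ModularOperad.act_eq_self fun n hn => hρ ?_).symm
      rw [P.legs_xi _ _ _ ha hb hab, f.legs_f _ (by simp) hnd] at hn
      simp only [Finset.mem_erase, List.mem_toFinset] at hn
      grind
    _ = P.xi c d (f.f (c :: X ++ d :: Y)) := by
      rw [P.act_xi ρ a b _ ha hb hab ρ.injective.injOn, hρa, hρb,
        ← f.f_act ρ _ (by simp) hnd ρ.injective.injOn, hmap]

/-- Cut `⟨a X₁ X₂ b Y₁ Y₂⟩` along the arc `cd` that separates `a` from `b`, and reglue it
along `ab`. -/
theorem xi_f_recut {a b c d : ℕ} {X₁ X₂ Y₁ Y₂ : List ℕ}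
    (h : (c :: d :: (a :: (X₁ ++ X₂) ++ b :: (Y₁ ++ Y₂))).Nodup) :
    P.xi a b (f.f (a :: (X₁ ++ X₂) ++ b :: (Y₁ ++ Y₂))) =
      P.xi c d (f.f (c :: (Y₂ ++ Y₁) ++ d :: (X₂ ++ X₁))) := by
  have hcut : ((Y₂ ++ a :: X₁) ++ c :: d :: (X₂ ++ b :: Y₁)).Nodup :=
    nodup_of_count_le h fun n => by grind
  have hreglue : ((X₁ ++ c :: Y₂) ++ a :: b :: (Y₁ ++ d :: X₂)).Nodup :=
    nodup_of_count_le h fun n => by grind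
  have hx : (Y₂ ++ a :: X₁ ++ [c]).Nodup := nodup_of_count_le hcut fun n => by grind
  have hy : (d :: (X₂ ++ b :: Y₁)).Nodup := nodup_of_count_le hcut fun n => by grind
  have hx_rot : f.f (Y₂ ++ a :: X₁ ++ [c]) = f.f ((X₁ ++ c :: Y₂) ++ [a]) :=
    f.f_eq_of_isRotated hx (by simpa using List.isRotated_append (l := Y₂ ++ [a]) (l' := X₁ ++ [c]))
  have hy_rot : f.f (d :: (X₂ ++ b :: Y₁)) = f.f (b :: (Y₁ ++ d :: X₂)) :=
    f.f_eq_of_isRotated hy (by simpa using List.isRotated_append (l := d :: X₂) (l' := b :: Y₁))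
  have hdisj : Disjoint (P.legs (f.f (Y₂ ++ a :: X₁ ++ [c])))
      (P.legs (f.f (d :: (X₂ ++ b :: Y₁)))) := by
    rw [f.legs_f _ (by simp) hx, f.legs_f _ (by simp) hy, List.disjoint_toFinset_iff_disjoint]
    exact List.disjoint_of_nodup_append (by simpa using hcut)
  calc P.xi a b (f.f (a :: (X₁ ++ X₂) ++ b :: (Y₁ ++ Y₂)))
    _ = P.xi a b (f.f ((Y₂ ++ a :: X₁) ++ (X₂ ++ b :: Y₁))) := by
      rw [f.f_eq_of_isRotated h.of_cons.of_cons]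
      simpa using List.isRotated_append (l := a :: (X₁ ++ X₂) ++ b :: Y₁) (l' := Y₂)
    _ = P.xi a b (P.comp c d (f.f (Y₂ ++ a :: X₁ ++ [c])) (f.f (d :: (X₂ ++ b :: Y₁)))) := by
      rw [f.f_comp _ _ _ _ hcut (by simp)]
    _ = P.xi c d (P.comp a b (f.f (Y₂ ++ a :: X₁ ++ [c])) (f.f (d :: (X₂ ++ b :: Y₁)))) :=
      P.xi_comp_exchange _ _ _ _ _ _ (f.mem_legs hx (by simp)) (f.mem_legs hx (by simp))
        (f.mem_legs hy (by simp)) (f.mem_legs hy (by simp)) (by grind) (by grind) hdisj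
    _ = P.xi c d (f.f ((X₁ ++ c :: Y₂) ++ (Y₁ ++ d :: X₂))) := by
      rw [hx_rot, hy_rot, f.f_comp _ _ _ _ hreglue (by simp)]
    _ = P.xi c d (f.f (c :: (Y₂ ++ Y₁) ++ d :: (X₂ ++ X₁))) := by
      rw [f.f_eq_of_isRotated (nodup_of_count_le hreglue fun n => by grind)]
      simpa using List.isRotated_append (l := X₁) (l' := c :: (Y₂ ++ Y₁) ++ d :: X₂)

theorem xi_f_eq_of_isRotated_s10 {a b : ℕ} {X X' Y Y' : List ℕ} (h : (a :: X ++ b :: Y).Nodup)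
    (hX : X ~r X') (hY : Y ~r Y') :
    P.xi a b (f.f (a :: X ++ b :: Y)) = P.xi a b (f.f (a :: Y' ++ b :: X')) := by
  obtain ⟨X₁, X₂, rfl, rfl⟩ := exists_append_of_isRotated hX
  obtain ⟨Y₁, Y₂, rfl, rfl⟩ := exists_append_of_isRotated hY
  obtain ⟨c, hc⟩ := Infinite.exists_notMem_finset (a :: (X₁ ++ X₂) ++ b :: (Y₁ ++ Y₂)).toFinset
  obtain ⟨d, hd⟩ :=
    Infinite.exists_notMem_finset (c :: (a :: (X₁ ++ X₂) ++ b :: (Y₁ ++ Y₂))).toFinset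
  rw [List.mem_toFinset] at hc hd
  have hcd : (d :: c :: (a :: (X₁ ++ X₂) ++ b :: (Y₁ ++ Y₂))).Nodup :=
    List.nodup_cons.2 ⟨hd, List.nodup_cons.2 ⟨hc, h⟩⟩
  rw [f.xi_f_recut (hcd.perm (.swap _ _ _)), f.xi_f_relabel (c := a) (d := b)
      (nodup_of_count_le hcd fun n => by grind)]

variable {f} {S : List (ℕ × ℕ)}

/-- `l` and `l'` are words in the same labels and the contractions `ξ_{ab}`, `(a, b) ∈ S`, take
`f⟨l⟩` and `f⟨l'⟩` to the same element.  The equality is only demanded when it makes sense, namely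
when the labels in `l` are distinct and include all those contracted, each occurring once in `S`;
this way the relation can be manipulated without side conditions. -/
def ContractEq (f : AssMorphism P) (S : List (ℕ × ℕ)) (l l' : List ℕ) : Prop :=
  l.Perm l' ∧ (l.Nodup → (endpoints S).Subperm l → xiChain P S (f.f l) = xiChain P S (f.f l'))

namespace ContractEq

theorem trans {l l' l'' : List ℕ} (h : ContractEq f S l l') (h' : ContractEq f S l' l'') :
    ContractEq f S l l'' :=
  ⟨h.1.trans h'.1, fun hl hS =>
    (h.2 hl hS).trans (h'.2 (h.1.nodup_iff.1 hl) (hS.trans h.1.subperm))⟩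

instance : Trans (ContractEq f S) (ContractEq f S) (ContractEq f S) := ⟨trans⟩

theorem of_isRotated {l l' : List ℕ} (h : l ~r l') : ContractEq f S l l' :=
  ⟨h.perm, fun hl _ => by rw [f.f_eq_of_isRotated hl h]⟩

theorem of_xi_eq {l l' : List ℕ} {a b : ℕ} (hab : (a, b) ∈ S) (hperm : l.Perm l')
    (h : l.Nodup → P.xi a b (f.f l) = P.xi a b (f.f l')) : ContractEq f S l l' :=
  ⟨hperm, fun hl hS => ModularOperad.xiChain_eq_of_xi_eq (nodup_of_count_le hl hS.count_le)
    (fun _ hc => f.mem_legs hl (hS.subset hc))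
    (fun _ hc => f.mem_legs (hperm.nodup_iff.1 hl) (hperm.subset (hS.subset hc))) hab (h hl)⟩

theorem swap_arcs {a b : ℕ} (hab : (a, b) ∈ S) {X X' Y Y' : List ℕ} (hX : X ~r X')
    (hY : Y ~r Y') : ContractEq f S (a :: X ++ b :: Y) (a :: Y' ++ b :: X') := by
  refine of_xi_eq hab ?_ fun h => f.xi_f_eq_of_isRotated_s10 h hX hY
  refine List.perm_iff_count.2 fun n => ?_
  have := hX.perm.count_eq n
  have := hY.perm.count_eq n
  grind

theorem exchange_arcs {a b : ℕ} (hab : (a, b) ∈ S) {A A' B B' X X' : List ℕ}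
    (hX : X ~r B' ++ A') (hX' : B ++ A ~r X') :
    ContractEq f S (A ++ a :: X ++ b :: B) (A' ++ a :: X' ++ b :: B') :=
  calc ContractEq f S (A ++ a :: X ++ b :: B) (a :: X ++ b :: (B ++ A)) :=
        of_isRotated (by simpa using List.isRotated_append (l := A) (l' := a :: X ++ b :: B))
    ContractEq f S _ (a :: X' ++ b :: (B' ++ A')) := swap_arcs hab hX hX'
    ContractEq f S _ (A' ++ a :: X' ++ b :: B') :=
        of_isRotated (by simpa using List.isRotated_append (l := a :: X' ++ b :: B') (l' := A'))

theorem rotate_arcs {a b : ℕ} (hab : (a, b) ∈ S) {A A' B B' X X' : List ℕ}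
    (hX : X ~r X') (hAB : B ++ A ~r B' ++ A') :
    ContractEq f S (A ++ a :: X ++ b :: B) (A' ++ a :: X' ++ b :: B') :=
  (exchange_arcs hab (A' := []) (by simpa using .refl X) hAB).trans
    (exchange_arcs hab (.refl _) (by simpa using hX))

end ContractEq

/-- Under the contractions `S`, the block `B` commutes with every word. -/
def IsCentral (f : AssMorphism P) (S : List (ℕ × ℕ)) (B : List ℕ) : Prop :=
  ∀ X Y Z : List ℕ, ContractEq f S (X ++ B ++ Y ++ Z) (X ++ Y ++ B ++ Z)

namespace IsCentral

theorem nil : IsCentral f S [] := fun X Y Z =>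
  .of_isRotated (by simpa using .refl (X ++ (Y ++ Z)))

theorem append {A B : List ℕ} (hA : IsCentral f S A) (hB : IsCentral f S B) :
    IsCentral f S (A ++ B) := fun X Y Z => by
  simpa using (hB (X ++ A) Y Z).trans (by simpa using hA X Y (B ++ Z))

theorem flatMap {α : Type*} {t : α → List ℕ} {L : List α} (h : ∀ p ∈ L, IsCentral f S (t p)) :
    IsCentral f S (L.flatMap t) := by
  induction L with
  | nil => exact nil
  | cons p L ih =>
    rw [List.forall_mem_cons] at h
    exact h.1.append (ih h.2)

theorem boundary {a b : ℕ} (hab : (a, b) ∈ S) (C : List ℕ) :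
    IsCentral f S (a :: (C ++ [b])) := fun X Y Z => by
  simpa using ContractEq.rotate_arcs hab (f := f) (A := X) (A' := X ++ Y) (B := Y ++ Z) (B' := Z)
    (.refl C) (by simpa using List.isRotated_append (l := Y) (l' := Z ++ X))

theorem handle {a b c d : ℕ} (hac : (a, c) ∈ S) (hbd : (b, d) ∈ S) :
    IsCentral f S [a, b, c, d] := fun X Y Z =>
  calc ContractEq f S (X ++ [a, b, c, d] ++ Y ++ Z) (X ++ a :: (Y ++ [b, c, d]) ++ Z) := by
        simpa using ContractEq.rotate_arcs hbd (A := X ++ [a]) (A' := X ++ a :: Y)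
          (B := Y ++ Z) (B' := Z) (.refl [c])
          (by simpa using List.isRotated_append (l := Y) (l' := Z ++ X ++ [a]))
    ContractEq f S _ (X ++ a :: b :: (Y ++ [c, d]) ++ Z) := by
        simpa using ContractEq.rotate_arcs hac (A := X) (B := d :: Z)
          (List.isRotated_append (l := Y) (l' := [b])) (.refl _)
    ContractEq f S _ (X ++ a :: b :: c :: (Y ++ [d]) ++ Z) := by
        simpa using ContractEq.rotate_arcs hbd (A := X ++ [a]) (B := Z)
          (List.isRotated_append (l := Y) (l' := [c])) (.refl _)
    ContractEq f S _ (X ++ Y ++ [a, b, c, d] ++ Z) := by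
        simpa using ContractEq.rotate_arcs hac (A := X) (A' := X ++ Y) (B := Y ++ d :: Z)
          (B' := d :: Z) (.refl [b])
          (by simpa using List.isRotated_append (l := Y) (l' := d :: Z ++ X))

end IsCentral

theorem ContractEq.exchange_blocks {a b : ℕ} (hab : (a, b) ∈ S) {M K : List ℕ}
    (hM : IsCentral f S M) (hK : IsCentral f S K) (C D : List ℕ) :
    ContractEq f S (C ++ M ++ a :: (D ++ [b]) ++ K) (D ++ M ++ a :: (C ++ [b]) ++ K) :=
  calc ContractEq f S (C ++ M ++ a :: (D ++ [b]) ++ K) (C ++ a :: (D ++ M) ++ b :: K) := by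
        simpa using hM C (a :: D) (b :: K)
    ContractEq f S _ (D ++ M ++ a :: (K ++ C) ++ b :: []) :=
        exchange_arcs hab (by simpa using .refl (D ++ M)) (.refl _)
    ContractEq f S _ (D ++ M ++ a :: (C ++ [b]) ++ K) := by
        simpa using hK (D ++ M ++ [a]) (C ++ [b]) []

end AssMorphism

section Canonical

variable (e : ℕ → ℕ)

/-- The block `e_{2k+1} C e_{2k+2}` that a boundary component `C` other than the first contributes
to `canonList`, given as the pair `p = (C, k)` of the shape produced by `List.zipIdx`. -/
def boundaryBlock (p : List ℕ × ℕ) : List ℕ := e (2 * p.2 + 1) :: (p.1 ++ [e (2 * p.2 + 2)])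

/-- The block `e_{k+1} e_{k+2} ⋯ e_{k+4g}` of all the handles, preceded by `k` labels. -/
def handleBlock (k g : ℕ) : List ℕ := (List.range (4 * g)).map fun j => e (k + 1 + j)

/-- The pairs contracted in `handleBlock e k g`. -/
def handlePairs (k g : ℕ) : List (ℕ × ℕ) :=
  (List.range g).flatMap fun j =>
    [(e (k + 1 + 4 * j), e (k + 3 + 4 * j)), (e (k + 2 + 4 * j), e (k + 4 + 4 * j))]

theorem canonList_cons (C : List ℕ) (L : List (List ℕ)) (g : ℕ) :
    canonList (C :: L) g e =
      C ++ L.zipIdx.flatMap (boundaryBlock e) ++ handleBlock e (2 * L.length) g := rfl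

theorem canonPairs_succ (n g : ℕ) :
    canonPairs (n + 1) g e = pairList e n ++ handlePairs e (2 * n) g := rfl

theorem handleBlock_succ (k g : ℕ) :
    handleBlock e k (g + 1) = handleBlock e k g ++
      [e (k + 1 + 4 * g), e (k + 2 + 4 * g), e (k + 3 + 4 * g), e (k + 4 + 4 * g)] := by
  have hidx (i : ℕ) : k + 1 + (4 * g + i) = k + 1 + i + 4 * g := by omega
  simp [handleBlock, mul_add, List.range_succ, hidx]

theorem handlePairs_succ (k g : ℕ) :
    handlePairs e k (g + 1) = handlePairs e k g ++
      [(e (k + 1 + 4 * g), e (k + 3 + 4 * g)), (e (k + 2 + 4 * g), e (k + 4 + 4 * g))] := by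
  simp [handlePairs, List.range_succ]

theorem mem_pairList {n i : ℕ} (hi : i < n) : (e (2 * i + 1), e (2 * i + 2)) ∈ pairList e n :=
  List.mem_map.2 ⟨i, List.mem_range.2 hi, rfl⟩

theorem endpoints_pairList (n : ℕ) :
    endpoints (pairList e n) = (List.range' 1 (2 * n)).map e := by
  induction n with
  | zero => rfl
  | succ n ih =>
    have hsucc : pairList e (n + 1) = pairList e n ++ [(e (2 * n + 1), e (2 * n + 2))] := by
      simp [pairList, List.range_succ]
    rw [hsucc, endpoints_append, ih, mul_add, ← List.range'_append_1, List.map_append]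
    simp [endpoints, List.range', add_comm 1]

theorem endpoints_handlePairs_perm (k g : ℕ) :
    (endpoints (handlePairs e k g)).Perm (handleBlock e k g) := by
  induction g with
  | zero => rfl
  | succ g ih =>
    rw [handlePairs_succ, handleBlock_succ, endpoints_append]
    exact ih.append (.cons _ (.swap _ _ _))

theorem handleBlock_eq_map_range' (k g : ℕ) :
    handleBlock e k g = (List.range' (1 + k) (4 * g)).map e := by
  rw [handleBlock, List.range'_eq_map_range, List.map_map, add_comm 1]
  rfl

theorem endpoints_canonPairs_perm (n g : ℕ) :
    (endpoints (canonPairs (n + 1) g e)).Perm ((List.range' 1 (2 * n + 4 * g)).map e) := by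
  rw [canonPairs_succ, endpoints_append, endpoints_pairList, ← List.range'_append_1,
    List.map_append, ← handleBlock_eq_map_range']
  exact (endpoints_handlePairs_perm e _ g).append_left _

theorem flatMap_boundaryBlock_perm (L : List (List ℕ)) (k : ℕ) :
    ((L.zipIdx k).flatMap (boundaryBlock e)).Perm
      (L.flatten ++ (List.range' (2 * k + 1) (2 * L.length)).map e) := by
  induction L generalizing k with
  | nil => rfl
  | cons C L ih =>
    refine List.perm_iff_count.2 fun n => ?_
    have hn := (ih (k + 1)).count_eq n
    rw [List.length_cons, mul_add, add_comm (2 * L.length), ← List.range'_append_1]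
    simp only [boundaryBlock, List.zipIdx_cons, List.flatMap_cons, List.flatten_cons, List.range',
      List.map_append, List.map_cons, List.map_nil, List.count_append, List.count_cons,
      List.count_nil, mul_add] at hn ⊢
    grind

theorem canonList_cons_perm (C : List ℕ) (L : List (List ℕ)) (g : ℕ) :
    (canonList (C :: L) g e).Perm
      ((C :: L).flatten ++ (List.range' 1 (2 * L.length + 4 * g)).map e) := by
  rw [canonList_cons, handleBlock_eq_map_range', ← List.range'_append_1, List.map_append,
    List.flatten_cons, ← List.append_assoc, List.append_assoc C L.flatten]
  exact ((flatMap_boundaryBlock_perm e L 0).append_left C).append_right _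

theorem endpoints_subperm_canonList (C : List ℕ) (L : List (List ℕ)) (g : ℕ) :
    (endpoints (canonPairs (C :: L).length g e)).Subperm (canonList (C :: L) g e) :=
  ((endpoints_canonPairs_perm e L.length g).subperm.trans
    (List.sublist_append_right _ _).subperm).trans (canonList_cons_perm e C L g).symm.subperm

theorem canonList_insert (A B : List ℕ) (M N : List (List ℕ)) (g : ℕ) :
    canonList (A :: (M ++ B :: N)) g e =
      A ++ M.zipIdx.flatMap (boundaryBlock e) ++
        e (2 * M.length + 1) :: (B ++ [e (2 * M.length + 2)]) ++
        ((N.zipIdx (M.length + 1)).flatMap (boundaryBlock e) ++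
          handleBlock e (2 * (M.length + (N.length + 1))) g) := by
  simp [canonList_cons, List.zipIdx_append, boundaryBlock]

end Canonical

theorem nodup_map_range'_of_injOn {α : Type*} {e : ℕ → α} {n : ℕ}
    (he : Set.InjOn e (Set.Icc 1 n)) : ((List.range' 1 n).map e).Nodup :=
  List.Nodup.map_on (fun i hi j hj h => by
    rw [List.mem_range'_1] at hi hj
    exact he (Set.mem_Icc.2 (by omega)) (Set.mem_Icc.2 (by omega)) h) List.nodup_range'

theorem nodup_canonList {C : List ℕ} {L : List (List ℕ)} {g : ℕ} {e : ℕ → ℕ}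
    (hL : (C :: L).flatten.Nodup)
    (he : FreshLabels e (4 * g + 2 * (C :: L).length - 2) (C :: L).flatten.toFinset) :
    (canonList (C :: L) g e).Nodup := by
  have hlen : 4 * g + 2 * (C :: L).length - 2 = 2 * L.length + 4 * g := by
    rw [List.length_cons]; omega
  rw [hlen] at he
  refine (canonList_cons_perm e C L g).nodup_iff.2 (hL.append (nodup_map_range'_of_injOn he.1) ?_)
  intro c hc hce
  obtain ⟨i, hi, rfl⟩ := List.mem_map.1 hce
  rw [List.mem_range'_1] at hi
  exact he.2 i (Set.mem_Icc.2 (by omega)) (List.mem_toFinset.2 hc)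

namespace AssMorphism

variable {P : ModularOperad} {f : AssMorphism P} {S : List (ℕ × ℕ)} {e : ℕ → ℕ}

theorem isCentral_boundaryBlocks {n : ℕ} (hS : pairList e n ⊆ S) {L : List (List ℕ)} {k : ℕ}
    (hk : k + L.length ≤ n) : IsCentral f S ((L.zipIdx k).flatMap (boundaryBlock e)) :=
  .flatMap fun p hp => .boundary (hS (mem_pairList e (by have := List.mem_zipIdx hp; omega))) p.1

theorem isCentral_handleBlock {k g : ℕ} (hS : handlePairs e k g ⊆ S) :
    IsCentral f S (handleBlock e k g) := by
  induction g with
  | zero => exact .nil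
  | succ g ih =>
    rw [handlePairs_succ, List.append_subset] at hS
    rw [handleBlock_succ]
    exact (ih hS.1).append (.handle (hS.2 (by simp)) (hS.2 (by simp)))

theorem contractEq_canonList_exchange (A B : List ℕ) (M N : List (List ℕ)) (g : ℕ) :
    ContractEq f (canonPairs (A :: (M ++ B :: N)).length g e)
      (canonList (A :: (M ++ B :: N)) g e) (canonList (B :: (M ++ A :: N)) g e) := by
  rw [canonList_insert, canonList_insert, List.length_cons, List.length_append, List.length_cons,
    canonPairs_succ]
  have hpairs := List.subset_append_left (pairList e (M.length + (N.length + 1)))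
    (handlePairs e (2 * (M.length + (N.length + 1))) g)
  exact .exchange_blocks (hpairs (mem_pairList e (by omega)))
    (isCentral_boundaryBlocks hpairs (by omega))
    ((isCentral_boundaryBlocks hpairs (by omega)).append
      (isCentral_handleBlock (List.subset_append_right _ _))) A B

end AssMorphism

theorem ftilde_exchange_blocks_general (P : ModularOperad) (f : AssMorphism P)
    (C₁ Ci : List ℕ) (M N : List (List ℕ)) (g : ℕ) (e : ℕ → ℕ)
    (hL : (C₁ :: (M ++ Ci :: N)).flatten.Nodup)
    (he : FreshLabels e (4 * g + 2 * (C₁ :: (M ++ Ci :: N)).length - 2)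
      (C₁ :: (M ++ Ci :: N)).flatten.toFinset) :
    xiChain P (canonPairs (C₁ :: (M ++ Ci :: N)).length g e)
        (f.f (canonList (C₁ :: (M ++ Ci :: N)) g e)) =
      xiChain P (canonPairs (C₁ :: (M ++ Ci :: N)).length g e)
        (f.f (canonList (Ci :: (M ++ C₁ :: N)) g e)) :=
  (AssMorphism.contractEq_canonList_exchange C₁ Ci M N g).2 (nodup_canonList hL he)
    (endpoints_subperm_canonList e C₁ (M ++ Ci :: N) g)

/-- (First half of the proof of Lemma 8.)  Exchanging the
blocks `C₁` and `Cᵢ` in `a_q`, keeping everything else unchanged, does not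
change the contracted element
`ξ_{12}ξ_{34}⋯ξ_{2b+4g-4,2b+4g-2} f(a_q)`. -/
theorem ftilde_exchange_blocks (P : ModularOperad) (f : AssMorphism P)
    (C₁ Ci : List ℕ) (M N : List (List ℕ)) (g : ℕ) (e : ℕ → ℕ)
    (hL : QOValid (C₁ :: (M ++ Ci :: N)))
    (he : FreshLabels e (4 * g + 2 * (C₁ :: (M ++ Ci :: N)).length - 2)
      (C₁ :: (M ++ Ci :: N)).flatten.toFinset) :
    xiChain P (canonPairs (C₁ :: (M ++ Ci :: N)).length g e)
        (f.f (canonList (C₁ :: (M ++ Ci :: N)) g e)) =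
      xiChain P (canonPairs (C₁ :: (M ++ Ci :: N)).length g e)
        (f.f (canonList (Ci :: (M ++ C₁ :: N)) g e)) :=
  ftilde_exchange_blocks_general P f C₁ Ci M N g e hL.2.1 he
end
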